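/- Let (G, G⁺, Δ) be a Garside structure and x ∈ G. Let y, z ∈ R(x) and u ∈ G⁺ with u⁻¹yu = z. Define iterated transports by u^{(0)} = u and u^{(i+1)} = the transport of u^{(i)} at φ^i(y) (so that u^{(i)} conjugates φ^i(y) to φ^i(z)). Then there exists k > 0 such that φ^k(y) = y and u^{(k)} = u. -/

import Mathlib

open scoped Pointwise Classical

/-- A Garside structure on a group `G`: a submonoid `pos` of positive elements with
trivial units, prefix and suffix lattice operations, and a Garside element `delta`. -/
structure GarsideStructure (G : Type*) [Group G] where
  /-- the submonoid of positive elements -/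
  pos : Submonoid G
  /-- the Garside element Δ -/
  delta : G
  /-- meet for the prefix order -/
  meet : G → G → G
  /-- join for the prefix order -/
  join : G → G → G
  /-- meet for the suffix order -/
  rmeet : G → G → G
  /-- join for the suffix order -/
  rjoin : G → G → G
  units_triv : ∀ a : G, a ∈ pos → a⁻¹ ∈ pos → a = 1
  meet_le_left : ∀ a b : G, (meet a b)⁻¹ * a ∈ pos
  meet_le_right : ∀ a b : G, (meet a b)⁻¹ * b ∈ pos
  le_meet : ∀ a b c : G, c⁻¹ * a ∈ pos → c⁻¹ * b ∈ pos → c⁻¹ * meet a b ∈ pos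
  le_join_left : ∀ a b : G, a⁻¹ * join a b ∈ pos
  le_join_right : ∀ a b : G, b⁻¹ * join a b ∈ pos
  join_le : ∀ a b c : G, a⁻¹ * c ∈ pos → b⁻¹ * c ∈ pos → (join a b)⁻¹ * c ∈ pos
  rmeet_le_left : ∀ a b : G, a * (rmeet a b)⁻¹ ∈ pos
  rmeet_le_right : ∀ a b : G, b * (rmeet a b)⁻¹ ∈ pos
  le_rmeet : ∀ a b c : G, a * c⁻¹ ∈ pos → b * c⁻¹ ∈ pos → rmeet a b * c⁻¹ ∈ pos
  rjoin_le_left : ∀ a b : G, rjoin a b * a⁻¹ ∈ pos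
  rjoin_le_right : ∀ a b : G, rjoin a b * b⁻¹ ∈ pos
  rjoin_le : ∀ a b c : G, c * a⁻¹ ∈ pos → c * b⁻¹ ∈ pos → c * (rjoin a b)⁻¹ ∈ pos
  delta_pos : delta ∈ pos
  /-- Δ is balanced: its positive prefixes coincide with its positive suffixes -/
  delta_balanced : ∀ s : G, s ∈ pos → (s⁻¹ * delta ∈ pos ↔ delta * s⁻¹ ∈ pos)
  /-- the set of simple elements (divisors of Δ) is finite -/
  divDelta_finite : {s : G | s ∈ pos ∧ s⁻¹ * delta ∈ pos}.Finite
  /-- the simple elements generate `G` -/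
  divDelta_generates : Subgroup.closure {s : G | s ∈ pos ∧ s⁻¹ * delta ∈ pos} = ⊤
  /-- the atoms generate the positive monoid -/
  atoms_generate :
    Submonoid.closure {a : G | a ∈ pos ∧ a ≠ 1 ∧
      ∀ b ∈ pos, b⁻¹ * a ∈ pos → b = 1 ∨ b = a} = pos
  /-- every atom divides Δ -/
  atoms_divide_delta : ∀ a : G, a ∈ pos → a ≠ 1 →
    (∀ b ∈ pos, b⁻¹ * a ∈ pos → b = 1 ∨ b = a) → a⁻¹ * delta ∈ pos
  /-- every element is bounded below and above by powers of Δ -/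
  delta_bounds : ∀ x : G, ∃ p q : ℤ, p ≤ q ∧ (delta ^ p)⁻¹ * x ∈ pos ∧ x⁻¹ * delta ^ q ∈ pos
  /-- conjugation by Δ maps the positive monoid bijectively onto itself -/
  conj_delta : ∀ a : G, a ∈ pos ↔ delta * a * delta⁻¹ ∈ pos
  /-- some positive power of Δ is central -/
  central_power : ∃ n : ℕ, 0 < n ∧ delta ^ n ∈ Subgroup.center G
  /-- no infinite strictly decreasing (for the prefix order) sequence of positive elements -/
  no_infinite_descent : ¬ ∃ f : ℕ → G, (∀ n, f n ∈ pos) ∧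
    ∀ n, (f (n + 1))⁻¹ * f n ∈ pos ∧ f (n + 1) ≠ f n

namespace GarsideStructure

variable {G : Type*} [Group G] (S : GarsideStructure G)

/-- the prefix order: `a ≼ b` iff `a⁻¹ * b` is positive -/
def le (a b : G) : Prop := a⁻¹ * b ∈ S.pos

/-- the set of positive prefixes of an element -/
def Div (d : G) : Set G := {s : G | s ∈ S.pos ∧ S.le s d}

/-- atoms: nontrivial positive elements with no nontrivial proper positive prefix -/
def IsAtomic (a : G) : Prop :=
  a ∈ S.pos ∧ a ≠ 1 ∧ ∀ b ∈ S.pos, S.le b a → b = 1 ∨ b = a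

/-- the set of atoms -/
def atoms : Set G := {a : G | S.IsAtomic a}

/-- the left denominator of `x`: `D_L x = (1 ∧ x)⁻¹` -/
def DL (x : G) : G := (S.meet 1 x)⁻¹

/-- the left numerator of `x`: `N_L x = D_L x * x` -/
def NL (x : G) : G := S.DL x * x

/-- the (left) swap `φ(x) = N_L x * (D_L x)⁻¹ = D_L x * x * (D_L x)⁻¹` -/
def swap (x : G) : G := S.DL x * x * (S.DL x)⁻¹

/-- an element is recurrent if it is fixed by some positive iterate of the swap map -/
def Recurrent (x : G) : Prop := ∃ m : ℕ, 0 < m ∧ S.swap^[m] x = x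

/-- the set `R(x)` of recurrent conjugates of `x` -/
def Rset (x : G) : Set G := {y : G | IsConj x y ∧ S.Recurrent y}

/-- the set `C⁺(x)` of positive conjugates of `x` -/
def Cpos (x : G) : Set G := {y : G | IsConj x y ∧ y ∈ S.pos}

/-- the set `C⁻(x)` of negative conjugates of `x` -/
def Cneg (x : G) : Set G := {y : G | IsConj x y ∧ y⁻¹ ∈ S.pos}

/-- the transport of `u` at `y`: with `y = a⁻¹ b` reduced, `u^{(1)} = (a u) ∧ (b u)` -/
def transport (y u : G) : G := S.meet (S.DL y * u) (S.NL y * u)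

/-- `Δ_X`: the least upper bound for the prefix order of a set `X` (`1` if there is none) -/
noncomputable def deltaOf (X : Set G) : G :=
  if h : ∃ d : G, (∀ x ∈ X, S.le x d) ∧ ∀ c : G, (∀ x ∈ X, S.le x c) → S.le d c
  then h.choose else 1

/-- the closure `X̄ = Div(Δ_X) ∩ 𝒜` of a set of atoms -/
noncomputable def closureOf (X : Set G) : Set G := S.Div (S.deltaOf X) ∩ S.atoms

/-- the subgroup `G_X` generated by the closure of `X` -/
noncomputable def GX (X : Set G) : Subgroup G := Subgroup.closure (S.closureOf X)

/-- the support of an element: the closure of the set of atoms appearing in atom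
factorizations of its left denominator and left numerator -/
noncomputable def supp (x : G) : Set G :=
  if h : ∃ p : List G × List G,
      (∀ a ∈ p.1, a ∈ S.atoms) ∧ (∀ a ∈ p.2, a ∈ S.atoms) ∧
      p.1.prod = S.DL x ∧ p.2.prod = S.NL x
  then S.closureOf ({a : G | a ∈ h.choose.1} ∪ {a : G | a ∈ h.choose.2})
  else ∅

/-- an LCM-Garside structure -/
structure IsLCM : Prop where
  delta_eq : S.delta = S.deltaOf S.atoms
  balanced : ∀ X ⊆ S.atoms, ∀ s ∈ S.pos,
    (S.le s (S.deltaOf X) ↔ S.deltaOf X * s⁻¹ ∈ S.pos)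
  div_eq : ∀ X ⊆ S.atoms,
    S.Div (S.deltaOf X) = S.Div S.delta ∩ {g : G | g ∈ S.GX X ∧ g ∈ S.pos}
  factor_closed : ∀ X ⊆ S.atoms, ∀ g : G, g ∈ S.GX X → g ∈ S.pos →
    ∀ a b : G, a ∈ S.pos → b ∈ S.pos → g = a * b → a ∈ S.GX X ∧ b ∈ S.GX X
  lattice_closed : ∀ X ⊆ S.atoms, ∀ a b : G, a ∈ S.GX X → b ∈ S.GX X →
    S.meet a b ∈ S.GX X ∧ S.join a b ∈ S.GX X
  fraction_closed : ∀ X ⊆ S.atoms, ∀ g : G, g ∈ S.GX X →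
    S.DL g ∈ S.GX X ∧ S.NL g ∈ S.GX X

/-- a standard parabolic subgroup: the subgroup generated by a saturated set of atoms -/
noncomputable def IsStandardParabolic (H : Subgroup G) : Prop :=
  ∃ X : Set G, X ⊆ S.atoms ∧ S.closureOf X = X ∧ H = S.GX X

/-- a parabolic subgroup: a conjugate of a standard parabolic subgroup -/
noncomputable def IsParabolic (H : Subgroup G) : Prop :=
  ∃ (P : Subgroup G) (c : G), S.IsStandardParabolic P ∧
    H = Subgroup.map (MulAut.conj c).toMonoidHom P

/-- the structure is support-preserving if conjugations between positive elements
conjugate the corresponding parabolic subgroups of the supports -/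
noncomputable def SupportPreserving : Prop :=
  ∀ y ∈ S.pos, ∀ z ∈ S.pos, ∀ α : G, α⁻¹ * y * α = z →
    Subgroup.map (MulAut.conj α⁻¹).toMonoidHom (S.GX (S.supp y)) = S.GX (S.supp z)

/-- `P` is the parabolic closure of `x` -/
noncomputable def IsParabolicClosure (x : G) (P : Subgroup G) : Prop :=
  S.IsParabolic P ∧ x ∈ P ∧ ∀ H : Subgroup G, S.IsParabolic H → x ∈ H → P ≤ H

end GarsideStructure

/-! Conjugating `y` by `u` turns swaps into transports, so a pair `(y, u)` can be followed along the
self-map `(y, u) ↦ (φ y, u⁽¹⁾)` of `G × G`. This map is injective on the pairs for which `y` and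
`u⁻¹ y u` are both recurrent. Transport is monotone for `≼` and fixes central elements, while the
swap of `y` is the transport of `y` at `y` itself; hence prefix intervals with central endpoints are
preserved in both coordinates. Such intervals are finite and, some power of `Δ` being central, every
element lies in one of them. Finally, an injective self-map of a finite set has only periodic
points. -/

theorem mem_periodicPts_of_mapsTo_of_injOn {α : Type*} {f : α → α} {s : Set α} (hs : s.Finite)
    (hmaps : Set.MapsTo f s s) (hinj : Set.InjOn f s) {x : α} (hx : x ∈ s) :
    x ∈ Function.periodicPts f := by
  have : Finite s := hs
  have hsemi : Function.Semiconj ((↑) : s → α) (hmaps.restrict f s s) f := fun _ ↦ rfl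
  exact hsemi.mapsTo_periodicPts ((hmaps.restrict_inj.2 hinj).mem_periodicPts ⟨x, hx⟩)

namespace GarsideStructure

variable {G : Type*} [Group G] (S : GarsideStructure G)

theorem le_trans {a b c : G} (hab : S.le a b) (hbc : S.le b c) : S.le a c := by
  simpa [le, mul_assoc] using S.pos.mul_mem hab hbc

theorem le_antisymm {a b : G} (hab : S.le a b) (hba : S.le b a) : a = b :=
  inv_mul_eq_one.1 <| S.units_triv (a⁻¹ * b) hab (by simpa [le] using hba)

theorem mul_le_mul_left_iff (c : G) {a b : G} : S.le (c * a) (c * b) ↔ S.le a b := by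
  simp [le, mul_assoc]

theorem inv_mul_le_iff_le_mul {a b c : G} : S.le (c⁻¹ * a) b ↔ S.le a (c * b) := by
  simp [le, mul_assoc]

theorem mul_delta_inv_le_iff_le_mul_delta {a b : G} :
    S.le (a * S.delta⁻¹) b ↔ S.le a (b * S.delta) := by
  simp [le, S.conj_delta (a⁻¹ * (b * S.delta)), mul_assoc]

theorem mul_meet (c a b : G) : c * S.meet a b = S.meet (c * a) (c * b) := by
  apply S.le_antisymm
  · exact S.le_meet _ _ _ ((S.mul_le_mul_left_iff c).2 (S.meet_le_left a b))
      ((S.mul_le_mul_left_iff c).2 (S.meet_le_right a b))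
  · refine S.inv_mul_le_iff_le_mul.1 (S.le_meet _ _ _ ?_ ?_)
    · exact S.inv_mul_le_iff_le_mul.2 (S.meet_le_left _ _)
    · exact S.inv_mul_le_iff_le_mul.2 (S.meet_le_right _ _)

theorem meet_le_meet {a b c d : G} (hac : S.le a c) (hbd : S.le b d) :
    S.le (S.meet a b) (S.meet c d) :=
  S.le_meet _ _ _ (S.le_trans (S.meet_le_left a b) hac) (S.le_trans (S.meet_le_right a b) hbd)

theorem meet_mem_pos {a b : G} (ha : a ∈ S.pos) (hb : b ∈ S.pos) : S.meet a b ∈ S.pos := by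
  simpa using S.le_meet a b 1 (by simpa using ha) (by simpa using hb)

/-- The interval between `a` and `b` for the prefix order, i.e. `Set.Icc a b` for `≼`, which is
not registered as an order instance on `G`. -/
def prefixIcc (a b : G) : Set G := {g | S.le a g ∧ S.le g b}

theorem Div_one : S.Div 1 = {1} := by
  ext s
  constructor
  · rintro ⟨hs, hs'⟩
    exact S.units_triv s hs (by simpa [le] using hs')
  · rintro rfl
    exact ⟨S.pos.one_mem, by simp [le]⟩

theorem Div_mul_delta_subset {a : G} (ha : a ∈ S.pos) :
    S.Div (a * S.delta) ⊆ S.Div a * S.Div S.delta := by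
  rintro s ⟨hs, hsa⟩
  have hle : S.le (s * S.delta⁻¹) (S.meet a s) := by
    refine S.le_meet _ _ _ (S.mul_delta_inv_le_iff_le_mul_delta.2 hsa) ?_
    simpa [mul_assoc] using S.delta_pos
  refine ⟨S.meet a s, ⟨S.meet_mem_pos ha hs, S.meet_le_left a s⟩, (S.meet a s)⁻¹ * s,
    ⟨S.meet_le_right a s, ?_⟩, mul_inv_cancel_left _ _⟩
  exact S.inv_mul_le_iff_le_mul.2 (S.mul_delta_inv_le_iff_le_mul_delta.1 hle)

theorem finite_Div_delta_pow (n : ℕ) : (S.Div (S.delta ^ n)).Finite := by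
  induction n with
  | zero => simp [Div_one]
  | succ n ih =>
    rw [pow_succ]
    have hdelta : (S.Div S.delta).Finite := S.divDelta_finite
    exact (ih.mul hdelta).subset (S.Div_mul_delta_subset (S.pos.pow_mem S.delta_pos n))

theorem delta_zpow_le_delta_zpow {m n : ℤ} (h : m ≤ n) : S.le (S.delta ^ m) (S.delta ^ n) := by
  obtain ⟨r, rfl⟩ := Int.le.dest h
  simpa [le, zpow_add] using S.pos.pow_mem S.delta_pos r

theorem exists_le_delta_pow_mem_center (g : G) :
    ∃ n : ℕ, S.delta ^ n ∈ Subgroup.center G ∧ S.le g (S.delta ^ n) := by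
  obtain ⟨n, hn, hcentral⟩ := S.central_power
  obtain ⟨_, q, -, -, hq⟩ := S.delta_bounds g
  have hqn : q ≤ (n * q.toNat : ℕ) :=
    q.self_le_toNat.trans (by exact_mod_cast Nat.le_mul_of_pos_left _ hn)
  refine ⟨n * q.toNat, by simpa only [pow_mul] using pow_mem hcentral _, ?_⟩
  simpa only [zpow_natCast] using S.le_trans hq (S.delta_zpow_le_delta_zpow hqn)

theorem finite_prefixIcc (a b : G) : (S.prefixIcc a b).Finite := by
  obtain ⟨n, -, hn⟩ := S.exists_le_delta_pow_mem_center (a⁻¹ * b)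
  refine ((S.finite_Div_delta_pow n).image (a * ·)).subset ?_
  rintro g ⟨hag, hgb⟩
  exact ⟨a⁻¹ * g, ⟨hag, S.le_trans ((S.mul_le_mul_left_iff a⁻¹).2 hgb) hn⟩,
    mul_inv_cancel_left a g⟩

theorem exists_mem_center_mem_prefixIcc (g : G) :
    ∃ c ∈ Subgroup.center G, ∃ d ∈ Subgroup.center G, g ∈ S.prefixIcc c d := by
  obtain ⟨m, hm, hgm⟩ := S.exists_le_delta_pow_mem_center g⁻¹
  obtain ⟨n, hn, hgn⟩ := S.exists_le_delta_pow_mem_center g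
  refine ⟨(S.delta ^ m)⁻¹, inv_mem hm, S.delta ^ n, hn, ?_, hgn⟩
  simpa [le, Subgroup.mem_center_iff.1 hm g] using hgm

theorem transport_eq (y u : G) :
    S.transport y u = S.DL y * u * (S.DL (u⁻¹ * y * u))⁻¹ := by
  simp [DL, mul_meet, transport, NL, mul_assoc]

theorem transport_self (y : G) : S.transport y y = S.swap y := by
  simp [transport_eq, swap]

theorem transport_inv_mul_swap_mul_transport (y u : G) :
    (S.transport y u)⁻¹ * S.swap y * S.transport y u = S.swap (u⁻¹ * y * u) := by
  simp [transport_eq, swap, mul_assoc]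

theorem transport_le_transport (y : G) {u v : G} (h : S.le u v) :
    S.le (S.transport y u) (S.transport y v) :=
  S.meet_le_meet ((S.mul_le_mul_left_iff _).2 h) ((S.mul_le_mul_left_iff _).2 h)

theorem transport_of_mem_center (y : G) {c : G} (hc : c ∈ Subgroup.center G) :
    S.transport y c = c := by
  have hcomm := Subgroup.mem_center_iff.1 hc
  rw [transport_eq, mul_assoc c⁻¹, hcomm y, inv_mul_cancel_left, hcomm, mul_inv_cancel_right]

theorem transport_mem_prefixIcc (y : G) {c d u : G} (hc : c ∈ Subgroup.center G)
    (hd : d ∈ Subgroup.center G) (hu : u ∈ S.prefixIcc c d) :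
    S.transport y u ∈ S.prefixIcc c d := by
  rw [← S.transport_of_mem_center y hc, ← S.transport_of_mem_center y hd]
  exact ⟨S.transport_le_transport y hu.1, S.transport_le_transport y hu.2⟩

/-- One step of the transport dynamics: the self-map `(y, u) ↦ (φ y, u⁽¹⁾)` of `G × G`, where the
transport is taken at `y`. A pair `(y, u)` stands for the conjugator `u` from `y` to `u⁻¹ y u`. -/
def transportStep (p : G × G) : G × G := (S.swap p.1, S.transport p.1 p.2)

/-- The pairs `(y, u)` such that `u` conjugates a recurrent element `y` to a recurrent element. -/
def recurrentPairs : Set (G × G) := {p | S.Recurrent p.1 ∧ S.Recurrent (p.2⁻¹ * p.1 * p.2)}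

theorem bijOn_swap_recurrent : Set.BijOn S.swap {y | S.Recurrent y} {y | S.Recurrent y} :=
  Function.bijOn_periodicPts S.swap

theorem mapsTo_transportStep_recurrentPairs :
    Set.MapsTo S.transportStep S.recurrentPairs S.recurrentPairs := by
  rintro ⟨y, u⟩ ⟨hy, hyu⟩
  refine ⟨S.bijOn_swap_recurrent.mapsTo hy, ?_⟩
  rw [transportStep, transport_inv_mul_swap_mul_transport]
  exact S.bijOn_swap_recurrent.mapsTo hyu

theorem injOn_transportStep_recurrentPairs : Set.InjOn S.transportStep S.recurrentPairs := by
  rintro ⟨y, u⟩ ⟨hy, hyu⟩ ⟨y', v⟩ ⟨hy', hyv⟩ h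
  obtain ⟨hswap, htransport⟩ : S.swap y = S.swap y' ∧ S.transport y u = S.transport y' v :=
    Prod.mk.inj h
  obtain rfl : y = y' := S.bijOn_swap_recurrent.injOn hy hy' hswap
  have hconj : u⁻¹ * y * u = v⁻¹ * y * v := by
    apply S.bijOn_swap_recurrent.injOn hyu hyv
    simp only [← transport_inv_mul_swap_mul_transport, htransport]
  rw [transport_eq, transport_eq, hconj] at htransport
  obtain rfl : u = v := mul_left_cancel (mul_right_cancel htransport)
  rfl

theorem mapsTo_transportStep_prefixIcc_prod {c d c' d' : G} (hc : c ∈ Subgroup.center G)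
    (hd : d ∈ Subgroup.center G) (hc' : c' ∈ Subgroup.center G) (hd' : d' ∈ Subgroup.center G) :
    Set.MapsTo S.transportStep (S.prefixIcc c d ×ˢ S.prefixIcc c' d')
      (S.prefixIcc c d ×ˢ S.prefixIcc c' d') := by
  rintro ⟨y, u⟩ ⟨hy, hu⟩
  refine ⟨?_, S.transport_mem_prefixIcc y hc' hd' hu⟩
  rw [transportStep, ← transport_self]
  exact S.transport_mem_prefixIcc y hc hd hy

theorem recurrentPairs_subset_periodicPts :
    S.recurrentPairs ⊆ Function.periodicPts S.transportStep := by
  rintro ⟨y, u⟩ hyu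
  obtain ⟨c, hc, d, hd, hy⟩ := S.exists_mem_center_mem_prefixIcc y
  obtain ⟨c', hc', d', hd', hu⟩ := S.exists_mem_center_mem_prefixIcc u
  have hfinite := (S.finite_prefixIcc c d).prod (S.finite_prefixIcc c' d')
  exact mem_periodicPts_of_mapsTo_of_injOn (hfinite.inter_of_right S.recurrentPairs)
    (S.mapsTo_transportStep_recurrentPairs.inter_inter
      (S.mapsTo_transportStep_prefixIcc_prod hc hd hc' hd'))
    (S.injOn_transportStep_recurrentPairs.mono Set.inter_subset_left) ⟨hyu, hy, hu⟩

theorem iterate_transportStep (y : G) {U : ℕ → G}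
    (hU : ∀ i, U (i + 1) = S.transport (S.swap^[i] y) (U i)) (i : ℕ) :
    S.transportStep^[i] (y, U 0) = (S.swap^[i] y, U i) := by
  induction i with
  | zero => rfl
  | succ i ih =>
    rw [Function.iterate_succ_apply', ih, Function.iterate_succ_apply', hU, transportStep]

end GarsideStructure

theorem garside_transport_repeats_general {G : Type*} [Group G] (S : GarsideStructure G) {y u : G}
    (hy : S.Recurrent y) (hyu : S.Recurrent (u⁻¹ * y * u)) {U : ℕ → G} (hU0 : U 0 = u)
    (hUs : ∀ i : ℕ, U (i + 1) = S.transport (S.swap^[i] y) (U i)) :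
    ∃ k : ℕ, 0 < k ∧ S.swap^[k] y = y ∧ U k = u := by
  subst hU0
  obtain ⟨k, hk, hperiodic⟩ : (y, U 0) ∈ Function.periodicPts S.transportStep :=
    S.recurrentPairs_subset_periodicPts ⟨hy, hyu⟩
  exact ⟨k, hk, Prod.mk.inj ((S.iterate_transportStep y hUs k).symm.trans hperiodic)⟩

/-- iterated transports of a positive conjugator between two recurrent
conjugates of `x` repeat: there is `k > 0` with `φᵏ(y) = y` and `u⁽ᵏ⁾ = u`. -/
theorem garside_transport_repeats {G : Type*} [Group G]
    (S : GarsideStructure G) (x y z u : G)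
    (hy : y ∈ S.Rset x) (hz : z ∈ S.Rset x) (hu : u ∈ S.pos)
    (hconj : u⁻¹ * y * u = z)
    (U : ℕ → G) (hU0 : U 0 = u)
    (hUs : ∀ i : ℕ, U (i + 1) = S.transport (S.swap^[i] y) (U i)) :
    ∃ k : ℕ, 0 < k ∧ S.swap^[k] y = y ∧ U k = u :=
  garside_transport_repeats_general S hy.2 (hconj ▸ hz.2) hU0 hUs
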